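/- Let G^C be an admissible cluster-DAG and let G^C_{≤4} be the cluster-DAG obtained from G^C by reducing the size of every cluster of size greater than 4 to size 4 (keeping the same edges). Let X^C, Y^C, Z^C be pairwise disjoint sets of clusters. Then the following are equivalent: (1) there exists a micro graph G^m compatible with G^C containing a Z^m-active path from X^m to Y^m; (2) there exists a micro graph compatible with G^C_{≤4} containing a Z^m-active path from X^m to Y^m (where X^m, Y^m, Z^m are the corresponding variable sets in each case). -/

import Mathlib

/-! Mixed graphs, d-separation, structures of interest, and cluster-DAGs. -/

/-- A mixed graph: directed edges and (symmetric) bidirected edges. -/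
structure MixedGraph (V : Type*) where
  dir : V → V → Prop
  bidir : V → V → Prop
  bidir_symm : ∀ a b, bidir a b → bidir b a

namespace MixedGraph

variable {V : Type*}

/-- Adjacency: joined by a directed edge (in either orientation) or a bidirected edge. -/
def adj (G : MixedGraph V) (a b : V) : Prop := G.dir a b ∨ G.dir b a ∨ G.bidir a b

/-- The edge between `a` and `b` has an arrowhead at `b`. -/
def intoHead (G : MixedGraph V) (a b : V) : Prop := G.dir a b ∨ G.bidir a b

/-- `b` is a descendant of `a` (reachable from `a` by a directed path, including `a`). -/
def Descendant (G : MixedGraph V) (a b : V) : Prop := Relation.ReflTransGen G.dir a b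

/-- The directed part of `G` is acyclic. -/
def Acyclic (G : MixedGraph V) : Prop := ∀ v, ¬ Relation.TransGen G.dir v v

/-- `b` is a collider on the (sub)path `a - b - c`. -/
def Collider (G : MixedGraph V) (a b c : V) : Prop := G.intoHead a b ∧ G.intoHead c b

/-- The middle vertex `b` of the triple `a - b - c` is active relative to `Z`. -/
def ActiveTriple (G : MixedGraph V) (Z : Set V) (a b c : V) : Prop :=
  (G.Collider a b c → b ∈ Z ∨ ∃ d ∈ Z, G.Descendant b d) ∧
  (¬ G.Collider a b c → b ∉ Z)

/-- A walk in a mixed graph: a nonempty list of vertices, consecutive ones adjacent. -/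
def IsWalk (G : MixedGraph V) (p : List V) : Prop := p ≠ [] ∧ p.Chain' G.adj

/-- A `Z`-active walk. -/
def ActiveWalk (G : MixedGraph V) (Z : Set V) (p : List V) : Prop :=
  G.IsWalk p ∧ ∀ (i : ℕ) (h : i + 2 < p.length),
    G.ActiveTriple Z (p[i]'(by omega)) (p[i+1]'(by omega)) (p[i+2]'h)

/-- A `Z`-active path (a `Z`-active walk with pairwise distinct vertices). -/
def ActivePath (G : MixedGraph V) (Z : Set V) (p : List V) : Prop :=
  G.ActiveWalk Z p ∧ p.Nodup

/-- `X` and `Y` are d-connected given `Z` in `G`. -/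
def DConnected (G : MixedGraph V) (X Y Z : Set V) : Prop :=
  ∃ p : List V, G.ActivePath Z p ∧
    (∃ x ∈ X, p.head? = some x) ∧ (∃ y ∈ Y, p.getLast? = some y)

/-- `σ` is a subgraph of `G`. -/
def Subgraph (σ G : MixedGraph V) : Prop :=
  (∀ a b, σ.dir a b → G.dir a b) ∧ (∀ a b, σ.bidir a b → G.bidir a b)

/-- Union of two mixed graphs. -/
def union (G₁ G₂ : MixedGraph V) : MixedGraph V where
  dir a b := G₁.dir a b ∨ G₂.dir a b
  bidir a b := G₁.bidir a b ∨ G₂.bidir a b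
  bidir_symm a b h := h.imp (G₁.bidir_symm a b) (G₂.bidir_symm a b)

/-- Add the directed edge `a → b`. -/
def addDir (G : MixedGraph V) (a b : V) : MixedGraph V where
  dir x y := G.dir x y ∨ (x = a ∧ y = b)
  bidir := G.bidir
  bidir_symm := G.bidir_symm

/-- Remove the directed edge `a → b`. -/
def removeDir (G : MixedGraph V) (a b : V) : MixedGraph V where
  dir x y := G.dir x y ∧ ¬ (x = a ∧ y = b)
  bidir := G.bidir
  bidir_symm := G.bidir_symm

/-- Add the bidirected edge `a ↔ b`. -/
def addBidir (G : MixedGraph V) (a b : V) : MixedGraph V where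
  dir := G.dir
  bidir x y := G.bidir x y ∨ (x = a ∧ y = b) ∨ (x = b ∧ y = a)
  bidir_symm x y h := by
    rcases h with h | ⟨hx, hy⟩ | ⟨hx, hy⟩
    · exact Or.inl (G.bidir_symm x y h)
    · exact Or.inr (Or.inr ⟨hy, hx⟩)
    · exact Or.inr (Or.inl ⟨hy, hx⟩)

/-- Remove the bidirected edge `a ↔ b`. -/
def removeBidir (G : MixedGraph V) (a b : V) : MixedGraph V where
  dir := G.dir
  bidir x y := G.bidir x y ∧ ¬ ((x = a ∧ y = b) ∨ (x = b ∧ y = a))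
  bidir_symm x y h := ⟨G.bidir_symm x y h.1, fun hc => h.2 (by tauto)⟩

/-- Remove all bidirected edges. -/
def removeAllBidir (G : MixedGraph V) : MixedGraph V :=
  ⟨G.dir, fun _ _ => False, fun _ _ h => h.elim⟩

/-- The mutilated graph `G_{\bar A, \underline B}`: remove every edge with an arrowhead
into a vertex of `A` and every directed edge out of a vertex of `B`. -/
def mutilate (G : MixedGraph V) (A B : Set V) : MixedGraph V where
  dir a b := G.dir a b ∧ b ∉ A ∧ a ∉ B
  bidir a b := G.bidir a b ∧ a ∉ A ∧ b ∉ A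
  bidir_symm a b h := ⟨G.bidir_symm a b h.1, h.2.2, h.2.1⟩

end MixedGraph

variable {V : Type*}

/-- The roots of `σ` with vertex set `S`: vertices with no outgoing directed edge. -/
def Roots (S : Set V) (σ : MixedGraph V) : Set V := {v | v ∈ S ∧ ∀ w, ¬ σ.dir v w}

/-- Node condition for structures of interest: at most one outgoing directed edge,
or two outgoing directed edges but no edge with an arrowhead into it. -/
def OutCondition (σ : MixedGraph V) (v : V) : Prop :=
  (∀ w₁ w₂, σ.dir v w₁ → σ.dir v w₂ → w₁ = w₂) ∨
  ((∃ w₁ w₂, w₁ ≠ w₂ ∧ σ.dir v w₁ ∧ σ.dir v w₂ ∧ ∀ w, σ.dir v w → w = w₁ ∨ w = w₂) ∧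
    (∀ u, ¬ σ.dir u v) ∧ (∀ u, ¬ σ.bidir u v))

/-- `σ`, with vertex set `S`, is a structure of interest: an ADMG with a single
connected component whose nodes satisfy the out-degree condition. -/
def IsSOI (S : Set V) (σ : MixedGraph V) : Prop :=
  (∀ a b, σ.dir a b → a ∈ S ∧ b ∈ S) ∧
  (∀ a b, σ.bidir a b → a ∈ S ∧ b ∈ S) ∧
  S.Nonempty ∧
  (∀ a ∈ S, ∀ b ∈ S, Relation.ReflTransGen σ.adj a b) ∧
  σ.Acyclic ∧
  (∀ v ∈ S, OutCondition σ v)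

/-- The structure of interest `σ` (with vertex set `S`) connects `X` and `Y` under `Z`
inside the mixed graph `G`. -/
def SOIConnects (S : Set V) (σ G : MixedGraph V) (X Y Z : Set V) : Prop :=
  MixedGraph.Subgraph σ G ∧
  (S ∩ X).Nonempty ∧ (S ∩ Y).Nonempty ∧
  Roots S σ ⊆ X ∪ Y ∪ Z ∧
  (∀ v ∈ S, v ∉ Roots S σ → v ∉ Z)

/-- `b` is a fork on the (sub)path `a - b - c`. -/
def ForkAt (G : MixedGraph V) (a b c : V) : Prop := G.dir b a ∧ G.dir b c

/-- `b` is a chain on the (sub)path `a - b - c`. -/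
def ChainAt (G : MixedGraph V) (a b c : V) : Prop :=
  (G.dir a b ∧ G.dir b c) ∨ (G.dir c b ∧ G.dir b a)

/-- The path `p` contains at most one interior triple satisfying `P` whose middle
vertex lies in `T`. -/
def AtMostOneTriple (P : V → V → V → Prop) (T : Set V) (p : List V) : Prop :=
  ∀ (i j : ℕ) (hi : i + 2 < p.length) (hj : j + 2 < p.length),
    P (p[i]'(by omega)) (p[i+1]'(by omega)) (p[i+2]'hi) →
    P (p[j]'(by omega)) (p[j+1]'(by omega)) (p[j+2]'hj) →
    (p[i+1]'(by omega)) ∈ T → (p[j+1]'(by omega)) ∈ T → i = j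

/-- `σ` is exactly the subgraph consisting of the vertices of the path `p` and
one edge joining each pair of consecutive vertices of `p`. -/
def IsPathGraph (σ : MixedGraph V) (p : List V) : Prop :=
  p ≠ [] ∧ p.Nodup ∧
  (∀ (i : ℕ) (h : i + 1 < p.length),
    (σ.dir (p[i]'(by omega)) (p[i+1]'h) ∧ ¬ σ.dir (p[i+1]'h) (p[i]'(by omega)) ∧
      ¬ σ.bidir (p[i]'(by omega)) (p[i+1]'h)) ∨
    (σ.dir (p[i+1]'h) (p[i]'(by omega)) ∧ ¬ σ.dir (p[i]'(by omega)) (p[i+1]'h) ∧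
      ¬ σ.bidir (p[i]'(by omega)) (p[i+1]'h)) ∨
    (σ.bidir (p[i]'(by omega)) (p[i+1]'h) ∧ ¬ σ.dir (p[i]'(by omega)) (p[i+1]'h) ∧
      ¬ σ.dir (p[i+1]'h) (p[i]'(by omega)))) ∧
  (∀ a b, σ.dir a b → ∃ (i : ℕ) (h : i + 1 < p.length),
    ((p[i]'(by omega)) = a ∧ (p[i+1]'h) = b) ∨ ((p[i]'(by omega)) = b ∧ (p[i+1]'h) = a)) ∧
  (∀ a b, σ.bidir a b → ∃ (i : ℕ) (h : i + 1 < p.length),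
    ((p[i]'(by omega)) = a ∧ (p[i+1]'h) = b) ∨ ((p[i]'(by omega)) = b ∧ (p[i+1]'h) = a))

/-- A cluster-DAG: a mixed graph on clusters (self-loops and cycles allowed),
each cluster carrying a positive size. -/
structure ClusterDAG (C : Type*) where
  graph : MixedGraph C
  size : C → ℕ
  size_pos : ∀ c, 0 < size c

namespace ClusterDAG

variable {C : Type*}

/-- The micro vertex set: for each cluster `c`, variables `c_1, …, c_{#c}`. -/
abbrev MicroV (GC : ClusterDAG C) : Type _ := Σ c : C, Fin (GC.size c)

/-- The micro graph `Gm` is compatible with the cluster-DAG `GC`. -/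
def Compatible (GC : ClusterDAG C) (Gm : MixedGraph GC.MicroV) : Prop :=
  Gm.Acyclic ∧
  (∀ A B : C, A ≠ B →
    (GC.graph.dir A B ↔ ∃ (i : Fin (GC.size A)) (j : Fin (GC.size B)), Gm.dir ⟨A, i⟩ ⟨B, j⟩)) ∧
  (∀ A B : C, A ≠ B →
    (GC.graph.bidir A B ↔ ∃ (i : Fin (GC.size A)) (j : Fin (GC.size B)), Gm.bidir ⟨A, i⟩ ⟨B, j⟩)) ∧
  (∀ A : C, (GC.graph.dir A A ↔ ∃ i j : Fin (GC.size A), i ≠ j ∧ Gm.dir ⟨A, i⟩ ⟨A, j⟩)) ∧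
  (∀ A : C, (GC.graph.bidir A A ↔ ∃ i j : Fin (GC.size A), i ≠ j ∧ Gm.bidir ⟨A, i⟩ ⟨A, j⟩))

/-- `GC` is admissible: some compatible micro graph exists. -/
def Admissible (GC : ClusterDAG C) : Prop := ∃ Gm, GC.Compatible Gm

/-- The set of micro variables belonging to clusters of `S`. -/
def microSet (GC : ClusterDAG C) (S : Set C) : Set GC.MicroV := {v | v.1 ∈ S}

/-- The indexing inside each cluster is consistent with a topological order of `Gm`:
`V_i` is never a strict descendant of `V_j` when `i < j`. -/
def TopoConsistent (GC : ClusterDAG C) (Gm : MixedGraph GC.MicroV) : Prop :=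
  ∀ (A : C) (i j : Fin (GC.size A)), i < j →
    ¬ Relation.TransGen Gm.dir ⟨A, j⟩ ⟨A, i⟩

/-- Remove all bidirected edges of the cluster-DAG. -/
def removeAllBidir (GC : ClusterDAG C) : ClusterDAG C :=
  ⟨GC.graph.removeAllBidir, GC.size, GC.size_pos⟩

/-- Add the bidirected edge `A ↔ B` to the cluster-DAG. -/
def addBidir (GC : ClusterDAG C) (A B : C) : ClusterDAG C :=
  ⟨GC.graph.addBidir A B, GC.size, GC.size_pos⟩

/-- Remove all directed self-loops of the cluster-DAG. -/
def removeDirSelfLoops (GC : ClusterDAG C) : ClusterDAG C :=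
  ⟨⟨fun A B => GC.graph.dir A B ∧ A ≠ B, GC.graph.bidir, GC.graph.bidir_symm⟩,
    GC.size, GC.size_pos⟩

/-- Add a directed self-loop on the cluster `Vc`. -/
def addDirSelfLoop (GC : ClusterDAG C) (Vc : C) : ClusterDAG C :=
  ⟨⟨fun A B => GC.graph.dir A B ∨ (A = Vc ∧ B = Vc), GC.graph.bidir, GC.graph.bidir_symm⟩,
    GC.size, GC.size_pos⟩

/-- Remove all intra-cluster directed edges of a micro graph. -/
def removeIntraDir (GC : ClusterDAG C) (Gm : MixedGraph GC.MicroV) : MixedGraph GC.MicroV where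
  dir a b := Gm.dir a b ∧ a.1 ≠ b.1
  bidir := Gm.bidir
  bidir_symm := Gm.bidir_symm

/-- Reduce every cluster of size greater than 4 to size 4. -/
def truncate4 (GC : ClusterDAG C) : ClusterDAG C where
  graph := GC.graph
  size c := min (GC.size c) 4
  size_pos c := lt_min (GC.size_pos c) (by norm_num)

/-- The minimal compatible graph `G^m_min` of a cluster-DAG. -/
def minGraph (GC : ClusterDAG C) : MixedGraph GC.MicroV where
  dir a b :=
    (a.1 = b.1 ∧ GC.graph.dir a.1 b.1 ∧ (a.2 : ℕ) < (b.2 : ℕ)) ∨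
    (a.1 ≠ b.1 ∧ GC.graph.dir a.1 b.1 ∧ (a.2 : ℕ) = 0 ∧ (b.2 : ℕ) = GC.size b.1 - 1)
  bidir a b := GC.graph.bidir a.1 b.1 ∧ a ≠ b
  bidir_symm a b h := ⟨GC.graph.bidir_symm _ _ h.1, Ne.symm h.2⟩

/-- The unfolded graph `G^{m,C}_u` of a cluster-DAG. -/
def unfolded (GC : ClusterDAG C) : MixedGraph GC.MicroV where
  dir a b := (minGraph GC).dir a b ∨
    (a.1 ≠ b.1 ∧ GC.graph.dir a.1 b.1 ∧ MixedGraph.Acyclic ((minGraph GC).addDir a b))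
  bidir := (minGraph GC).bidir
  bidir_symm := (minGraph GC).bidir_symm

/-- Relabel a micro graph by a permutation of the indices within each cluster. -/
def relabel (GC : ClusterDAG C) (Gm : MixedGraph GC.MicroV)
    (e : ∀ c, Fin (GC.size c) ≃ Fin (GC.size c)) : MixedGraph GC.MicroV where
  dir a b := Gm.dir ⟨a.1, (e a.1).symm a.2⟩ ⟨b.1, (e b.1).symm b.2⟩
  bidir a b := Gm.bidir ⟨a.1, (e a.1).symm a.2⟩ ⟨b.1, (e b.1).symm b.2⟩
  bidir_symm a b h := Gm.bidir_symm _ _ h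

end ClusterDAG

/-! Micro graphs of the truncated cluster-DAG become micro graphs of the original one by adding
isolated vertices. Conversely, the clusters of a micro graph are shrunk to four representatives one
after the other.

Of an active walk only the stretch between its first and its last visit to the cluster `A` has to be
replaced. Fix a topological order of the micro graph. In the shrunken graph `rep 0` comes first, so
that it can be the tail of every edge leaving `A`, and `rep 3` comes last and stays off the walk, to
realize the edges of the cluster-DAG that have an arrowhead at `A`. A collider in `A` has a
descendant in `Z`, hence can be moved forward to the last such vertex, whose place is taken by
`rep 1`. The only case in which these do not suffice is a stretch that enters `A` through an
arrowhead and leaves it through a tail: there `rep 2` is placed at a suitable point of the order to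
be passed as a non-collider.

An arrowhead that the identification of vertices adds to a directed edge of the walk comes from a
bidirected edge; this one can be deleted, since `rep 3` still realizes it. -/

namespace MixedGraph

variable {W : Type*}

/-! ### Marked walks -/

/-- The vertices having a descendant in `Z`; these are the vertices at which a `Z`-active path may
have a collider. -/
def ancestors (G : MixedGraph V) (Z : Set V) : Set V := {x | ∃ z ∈ Z, G.Descendant x z}

/-- `a` and `b` are adjacent; the Booleans `ma` and `mb` record whether the adjacency has an
arrowhead at `a` and at `b`, in the sense of `intoHead`. -/
def MarkedEdge (G : MixedGraph V) (a b : V) (ma mb : Bool) : Prop :=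
  G.adj a b ∧ (ma = true ↔ G.intoHead b a) ∧ (mb = true ↔ G.intoHead a b)

/-- A walk may pass through `x` when the marks at `x` of the two edges it uses are `ml` and `mr`:
colliders have to lie in `N`, the other vertices have to avoid `Z`. -/
def Passes (N Z : Set V) (x : V) (ml mr : Bool) : Prop := if ml && mr then x ∈ N else x ∉ Z

/-- `MarkedWalk E N Z x ml y mr p` is a walk from `x` to `y` along the marked edges `E` with vertex
list `p`, all of whose vertices satisfy `Passes N Z`. The endpoints are treated like inner
vertices: `ml` and `mr` are the marks of fictitious edges by which the walk enters `x` and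
leaves `y`, so that walks can be cut and glued at arbitrary vertices. -/
inductive MarkedWalk (E : V → V → Bool → Bool → Prop) (N Z : Set V) :
    V → Bool → V → Bool → List V → Prop
  | single {x : V} {ml mr : Bool} : Passes N Z x ml mr → MarkedWalk E N Z x ml x mr [x]
  | cons {x y z : V} {ml m m' mr : Bool} {p : List V} : Passes N Z x ml m → E x y m m' →
      MarkedWalk E N Z y m' z mr p → MarkedWalk E N Z x ml z mr (x :: p)

/-- A marked walk along `E`, active given `Z` in `G`, joins `x` to `y`. -/
def Reaches (G : MixedGraph V) (E : V → V → Bool → Bool → Prop) (Z : Set V) (x : V) (ml : Bool)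
    (y : V) (mr : Bool) : Prop := ∃ p, MarkedWalk E (G.ancestors Z) Z x ml y mr p

/-- The properties of `G.MarkedEdge` on which the surgery of walks relies: a marked edge without
arrowhead at its first vertex is a directed edge. They are shared by the union of the marked
edges of several graphs with the same directed edges. -/
structure IsMarking (G : MixedGraph V) (E : V → V → Bool → Bool → Prop) : Prop where
  symm : ∀ {a b ma mb}, E a b ma mb → E b a mb ma
  dir_of_tail : ∀ {a b mb}, E a b false mb → G.dir a b ∧ mb = true

section Passes

variable {N Z : Set V} {x : V} {ml mr : Bool}

theorem Passes.symm (h : Passes N Z x ml mr) : Passes N Z x mr ml := by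
  rwa [Passes, Bool.and_comm]

theorem passes_false_left : Passes N Z x false mr ↔ x ∉ Z := Iff.rfl

theorem passes_false_right : Passes N Z x ml false ↔ x ∉ Z := by
  rw [Passes, Bool.and_false, if_neg Bool.false_ne_true]

theorem Passes.imp {f : V → W} {N' Z' : Set W} (h : Passes N Z x ml mr) (hN : x ∈ N → f x ∈ N')
    (hZ : x ∉ Z → f x ∉ Z') : Passes N' Z' (f x) ml mr := by
  unfold Passes at h ⊢
  split_ifs at h ⊢
  exacts [hN h, hZ h]

end Passes

theorem markedEdge_isMarking (G : MixedGraph V) : G.IsMarking G.MarkedEdge where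
  symm := fun ⟨h, ha, hb⟩ => ⟨by
    rcases h with h | h | h
    exacts [.inr (.inl h), .inl h, .inr (.inr (G.bidir_symm _ _ h))], hb, ha⟩
  dir_of_tail := by
    rintro a b mb ⟨h, ha, hb⟩
    have htail : ¬ G.intoHead b a := by simpa only [Bool.false_eq_true, false_iff] using ha
    rcases h with h | h | h
    · exact ⟨h, hb.2 (.inl h)⟩
    · exact absurd (.inl h) htail
    · exact absurd (.inr (G.bidir_symm _ _ h)) htail

open Classical in
theorem markedEdge_of_adj {G : MixedGraph V} {a b : V} (h : G.adj a b) :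
    G.MarkedEdge a b (decide (G.intoHead b a)) (decide (G.intoHead a b)) :=
  ⟨h, decide_eq_true_iff, decide_eq_true_iff⟩

namespace MarkedWalk

variable {E : V → V → Bool → Bool → Prop} {N Z : Set V} {x y z w : V} {ml m m' mr : Bool}
  {p q : List V}

theorem head_mem (h : MarkedWalk E N Z x ml y mr p) : x ∈ p := by
  cases h <;> exact List.mem_cons_self

theorem head? (h : MarkedWalk E N Z x ml y mr p) : p.head? = some x := by
  cases h <;> rfl

theorem getLast? (h : MarkedWalk E N Z x ml y mr p) : p.getLast? = some y := by
  induction h with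
  | single => rfl
  | cons _ _ _ ih => simp [List.getLast?_cons, ih]

theorem notMem_of_false_left (h : MarkedWalk E N Z x false y mr p) : x ∉ Z := by
  cases h with
  | single h => exact h
  | cons h _ _ => exact h

theorem notMem_of_false_right (h : MarkedWalk E N Z x ml y false p) : y ∉ Z := by
  generalize hmr : false = mr at h
  induction h with
  | single h => exact passes_false_right.1 (hmr ▸ h)
  | cons _ _ _ ih => exact ih hmr

theorem append (h : MarkedWalk E N Z x ml y m p) (he : E y z m m')
    (h' : MarkedWalk E N Z z m' w mr q) : MarkedWalk E N Z x ml w mr (p ++ q) := by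
  induction h with
  | single hx => exact cons hx he h'
  | cons hx hxy _ ih => exact cons hx hxy (ih he)

theorem map {E' : W → W → Bool → Bool → Prop} {N' Z' : Set W} (f : V → W)
    (h : MarkedWalk E N Z x ml y mr p)
    (hpass : ∀ v ∈ p, ∀ ml mr, Passes N Z v ml mr → Passes N' Z' (f v) ml mr)
    (hE : ∀ v ∈ p, ∀ w ∈ p, ∀ mv mw, E v w mv mw → E' (f v) (f w) mv mw) :
    MarkedWalk E' N' Z' (f x) ml (f y) mr (p.map f) := by
  induction h with
  | single hx => exact single (hpass _ List.mem_cons_self _ _ hx)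
  | cons hx hxy h ih =>
    refine cons (hpass _ List.mem_cons_self _ _ hx)
      (hE _ List.mem_cons_self _ (List.mem_cons_of_mem _ h.head_mem) _ _ hxy) (ih ?_ ?_)
    · exact fun v hv => hpass v (List.mem_cons_of_mem _ hv)
    · exact fun v hv w hw => hE v (List.mem_cons_of_mem _ hv) w (List.mem_cons_of_mem _ hw)

theorem mono {E' : V → V → Bool → Bool → Prop} {N' Z' : Set V}
    (h : MarkedWalk E N Z x ml y mr p)
    (hpass : ∀ v ∈ p, ∀ ml mr, Passes N Z v ml mr → Passes N' Z' v ml mr)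
    (hE : ∀ v ∈ p, ∀ w ∈ p, ∀ mv mw, E v w mv mw → E' v w mv mw) :
    MarkedWalk E' N' Z' x ml y mr p := by
  simpa only [List.map_id, id_eq] using h.map id hpass hE

variable {G : MixedGraph V}

theorem exists_last_visit (S : Set V) (h : MarkedWalk E (G.ancestors Z) Z x ml y mr p) :
    (∀ v ∈ p, v ∉ S) ∨ ∃ v ∈ S, ∃ m, G.Reaches E Z x ml v m ∧ ((v = y ∧ m = mr) ∨
      ∃ z m' q, E v z m m' ∧ MarkedWalk E (G.ancestors Z) Z z m' y mr q ∧
        q.length < p.length ∧ q ⊆ p ∧ ∀ w ∈ q, w ∉ S) := by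
  induction h with
  | @single x ml mr hx =>
    by_cases hxS : x ∈ S
    · exact .inr ⟨x, hxS, mr, ⟨_, single hx⟩, .inl ⟨rfl, rfl⟩⟩
    · exact .inl (by simpa only [List.mem_singleton, forall_eq] using hxS)
  | @cons x y z ml m m' _ p hx hxy h ih =>
    have hlen : p.length < (x :: p).length := Nat.lt_succ_self _
    have hsub : p ⊆ x :: p := List.subset_cons_self x p
    rcases ih with havoid | ⟨v, hv, k, ⟨q, hq⟩, hrest⟩
    · by_cases hxS : x ∈ S
      · exact .inr ⟨x, hxS, m, ⟨_, single hx⟩, .inr ⟨y, m', p, hxy, h, hlen, hsub, havoid⟩⟩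
      · exact .inl (List.forall_mem_cons.2 ⟨hxS, havoid⟩)
    · refine .inr ⟨v, hv, k, ⟨_, cons hx hxy hq⟩, hrest.imp_right ?_⟩
      rintro ⟨u, k', r, he, hr, hrlen, hrsub, hrS⟩
      exact ⟨u, k', r, he, hr, hrlen.trans hlen, List.Subset.trans hrsub hsub, hrS⟩

theorem exists_last_edge (B : V → V → Bool → Bool → Prop)
    (h : MarkedWalk E (G.ancestors Z) Z x ml y mr p) :
    G.Reaches (fun a b ma mb => E a b ma mb ∧ ¬ B a b ma mb) Z x ml y mr ∨
    ∃ a ma b mb, G.Reaches E Z x ml a ma ∧ E a b ma mb ∧ B a b ma mb ∧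
      G.Reaches (fun a b ma mb => E a b ma mb ∧ ¬ B a b ma mb) Z b mb y mr := by
  induction h with
  | single hx => exact .inl ⟨_, single hx⟩
  | @cons x y _ _ m m' _ _ hx hxy _ ih =>
    rcases ih with ⟨q, hq⟩ | ⟨a, ma, b, mb, ⟨q, hq⟩, hab⟩
    · by_cases hB : B x y m m'
      · exact .inr ⟨x, m, y, m', ⟨_, single hx⟩, hxy, hB, q, hq⟩
      · exact .inl ⟨_, cons hx ⟨hxy, hB⟩ hq⟩
    · exact .inr ⟨a, ma, b, mb, ⟨_, cons hx hxy hq⟩, hab⟩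

theorem reverse (hE : G.IsMarking E) (h : MarkedWalk E N Z x ml y mr p) :
    MarkedWalk E N Z y mr x ml p.reverse := by
  induction h with
  | single hx => exact single hx.symm
  | cons hx hxy _ ih =>
    rw [List.reverse_cons]
    exact ih.append (hE.symm hxy) (single hx.symm)

/-- Starting at an arrowhead, the walk follows directed edges until it meets a collider. -/
theorem mem_ancestors_or_descendant (hE : G.IsMarking E)
    (h : MarkedWalk E (G.ancestors Z) Z x true y mr p) :
    x ∈ G.ancestors Z ∨ (mr = false ∧ G.Descendant x y) := by
  generalize hml : true = ml at h
  induction h with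
  | @single x ml mr hx =>
    subst hml
    cases mr with
    | true => exact .inl hx
    | false => exact .inr ⟨rfl, .refl⟩
  | @cons x y z ml m m' mr _ hx hxy _ ih =>
    subst hml
    cases m with
    | true => exact .inl hx
    | false =>
      obtain ⟨hdir, hm'⟩ := hE.dir_of_tail hxy
      rcases ih hm'.symm with ⟨d, hd, hyd⟩ | ⟨hmr, hyz⟩
      · exact .inl ⟨d, hd, .head hdir hyd⟩
      · exact .inr ⟨hmr, .head hdir hyz⟩

theorem passes_of_loop (hE : G.IsMarking E) (h : MarkedWalk E (G.ancestors Z) Z x ml x mr p) :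
    Passes (G.ancestors Z) Z x ml mr := by
  cases ml with
  | false => exact passes_false_left.2 h.notMem_of_false_left
  | true =>
    cases mr with
    | false => exact passes_false_right.2 h.notMem_of_false_right
    | true => exact (h.mem_ancestors_or_descendant hE).resolve_right (fun h => by cases h.1)

theorem exists_nodup (hE : G.IsMarking E) (h : MarkedWalk E (G.ancestors Z) Z x ml y mr p) :
    ∃ q, MarkedWalk E (G.ancestors Z) Z x ml y mr q ∧ q.Nodup ∧ q ⊆ p := by
  induction hn : p.length using Nat.strong_induction_on generalizing x ml p with
  | _ n ih =>
    rcases h.exists_last_visit {x} with havoid | ⟨v, rfl, m, ⟨p₁, hp₁⟩, hrest⟩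
    · exact absurd rfl (havoid x h.head_mem)
    have hpass := hp₁.passes_of_loop hE
    rcases hrest with ⟨rfl, rfl⟩ | ⟨z, m', r, hvz, hr, hlen, hsub, hvr⟩
    · exact ⟨[v], single hpass, List.nodup_singleton v, by simpa using h.head_mem⟩
    · obtain ⟨q, hq, hnodup, hqr⟩ := ih _ (hn ▸ hlen) hr rfl
      refine ⟨v :: q, cons hpass hvz hq, List.nodup_cons.2 ⟨fun hvq => hvr v (hqr hvq) rfl, hnodup⟩,
        List.cons_subset.2 ⟨h.head_mem, List.Subset.trans hqr hsub⟩⟩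

end MarkedWalk

theorem Reaches.symm {G : MixedGraph V} {E : V → V → Bool → Bool → Prop} {Z : Set V} {x y : V}
    {ml mr : Bool} (h : G.Reaches E Z x ml y mr) (hE : G.IsMarking E) :
    G.Reaches E Z y mr x ml :=
  h.elim fun _ hp => ⟨_, hp.reverse hE⟩

/-! ### Active paths as marked walks -/

theorem activeTriple_iff_passes {G : MixedGraph V} {Z : Set V} {a b c : V} {ml mr : Bool}
    (hml : ml = true ↔ G.intoHead a b) (hmr : mr = true ↔ G.intoHead c b) :
    G.ActiveTriple Z a b c ↔ Passes (G.ancestors Z) Z b ml mr := by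
  have hcollider : (ml && mr) = true ↔ G.Collider a b c := by
    rw [Bool.and_eq_true, hml, hmr, Collider]
  have hN : (b ∈ Z ∨ ∃ d ∈ Z, G.Descendant b d) ↔ b ∈ G.ancestors Z :=
    or_iff_right_of_imp fun hb => ⟨b, hb, .refl⟩
  rw [ActiveTriple, Passes, hN]
  split_ifs with h <;> rw [hcollider] at h <;> simp [h]

theorem activeWalk_cons_cons_cons {G : MixedGraph V} {Z : Set V} {a b c : V} {t : List V} :
    G.ActiveWalk Z (a :: b :: c :: t) ↔
      G.adj a b ∧ G.ActiveTriple Z a b c ∧ G.ActiveWalk Z (b :: c :: t) := by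
  constructor
  · rintro ⟨⟨-, hchain⟩, htriple⟩
    obtain ⟨hab, hchain⟩ := List.isChain_cons_cons.1 hchain
    exact ⟨hab, htriple 0 (by simp), ⟨List.cons_ne_nil _ _, hchain⟩,
      fun i hi => htriple (i + 1) (Nat.succ_lt_succ hi)⟩
  · rintro ⟨hab, htriple, ⟨-, hchain⟩, htriples⟩
    refine ⟨⟨List.cons_ne_nil _ _, List.isChain_cons_cons.2 ⟨hab, hchain⟩⟩, fun i hi => ?_⟩
    cases i with
    | zero => exact htriple
    | succ i => exact htriples i (Nat.lt_of_succ_lt_succ hi)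

theorem MarkedWalk.activeWalk {G : MixedGraph V} {Z : Set V} {x y : V} {ml mr : Bool} {p : List V}
    (h : MarkedWalk G.MarkedEdge (G.ancestors Z) Z x ml y mr p) : G.ActiveWalk Z p := by
  induction h with
  | single => exact ⟨⟨List.cons_ne_nil _ _, List.isChain_singleton _⟩, by simp⟩
  | cons _ hxy h ih =>
    cases h with
    | single => exact ⟨⟨List.cons_ne_nil _ _, List.isChain_pair.2 hxy.1⟩, by simp⟩
    | cons hy hyz h =>
      have hyz' := hyz
      cases h <;> exact activeWalk_cons_cons_cons.2
        ⟨hxy.1, (activeTriple_iff_passes hxy.2.2 hyz'.2.1).2 hy, ih⟩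

open Classical in
theorem ActiveWalk.reaches {G : MixedGraph V} {Z : Set V} {a b y : V} {t : List V}
    (h : G.ActiveWalk Z (a :: b :: t)) (hlast : (b :: t).getLast? = some y) (hy : y ∉ Z) :
    G.Reaches G.MarkedEdge Z b (decide (G.intoHead a b)) y false := by
  induction t generalizing a b with
  | nil =>
    obtain rfl : b = y := by simpa using hlast
    exact ⟨_, .single (passes_false_right.2 hy)⟩
  | cons c t ih =>
    obtain ⟨-, htriple, hrest⟩ := activeWalk_cons_cons_cons.1 h
    obtain ⟨p, hp⟩ := ih hrest (by simpa using hlast)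
    have hbc : G.adj b c := (List.isChain_cons_cons.1 hrest.1.2).1
    exact ⟨_, .cons ((activeTriple_iff_passes decide_eq_true_iff decide_eq_true_iff).1 htriple)
      (markedEdge_of_adj hbc) hp⟩

/-- `X` and `Y` are joined by a `Z`-active walk in `G`. -/
def WalkConnected (G : MixedGraph V) (X Y Z : Set V) : Prop :=
  ∃ x ∈ X, ∃ y ∈ Y, G.Reaches G.MarkedEdge Z x false y false

theorem WalkConnected.dConnected {G : MixedGraph V} {X Y Z : Set V} (h : G.WalkConnected X Y Z) :
    G.DConnected X Y Z := by
  obtain ⟨x, hx, y, hy, p, hp⟩ := h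
  obtain ⟨q, hq, hnodup, -⟩ := hp.exists_nodup (markedEdge_isMarking G)
  exact ⟨q, ⟨hq.activeWalk, hnodup⟩, ⟨x, hx, hq.head?⟩, y, hy, hq.getLast?⟩

theorem DConnected.walkConnected {G : MixedGraph V} {X Y Z : Set V} (h : G.DConnected X Y Z)
    (hXZ : Disjoint X Z) (hYZ : Disjoint Y Z) : G.WalkConnected X Y Z := by
  obtain ⟨p, ⟨hp, -⟩, ⟨x, hx, hhead⟩, y, hy, hlast⟩ := h
  have hxZ : x ∉ Z := Set.disjoint_left.1 hXZ hx
  have hyZ : y ∉ Z := Set.disjoint_left.1 hYZ hy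
  refine ⟨x, hx, y, hy, ?_⟩
  rcases p with - | ⟨a, - | ⟨b, t⟩⟩
  · cases hhead
  · obtain rfl : a = x := by simpa using hhead
    obtain rfl : a = y := by simpa using hlast
    exact ⟨_, .single (passes_false_left.2 hxZ)⟩
  · obtain rfl : a = x := by simpa using hhead
    obtain ⟨q, hq⟩ := hp.reaches (by simpa using hlast) hyZ
    exact ⟨_, .cons (passes_false_left.2 hxZ)
      (markedEdge_of_adj (List.isChain_cons_cons.1 hp.1.2).1) hq⟩

/-! ### Deleting edges, images and realizations -/

theorem ext {G H : MixedGraph V} (hdir : ∀ a b, G.dir a b ↔ H.dir a b)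
    (hbidir : ∀ a b, G.bidir a b ↔ H.bidir a b) : G = H := by
  obtain ⟨d, s, _⟩ := G
  obtain ⟨d', s', _⟩ := H
  obtain rfl : d = d' := funext₂ fun a b => propext (hdir a b)
  obtain rfl : s = s' := funext₂ fun a b => propext (hbidir a b)
  rfl

/-- The graph `G` without the bidirected edges whose endpoints are related by `F`, in either
order. -/
def deleteBidir (G : MixedGraph V) (F : V → V → Prop) : MixedGraph V where
  dir := G.dir
  bidir a b := G.bidir a b ∧ ¬ F a b ∧ ¬ F b a
  bidir_symm a b h := ⟨G.bidir_symm a b h.1, h.2.2, h.2.1⟩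

/-- The image of a mixed graph under a map of its vertices. -/
def map (f : V → W) (G : MixedGraph V) : MixedGraph W where
  dir := Relation.Map G.dir f f
  bidir := Relation.Map G.bidir f f
  bidir_symm := by
    rintro _ _ ⟨a, b, h, rfl, rfl⟩
    exact ⟨b, a, G.bidir_symm a b h, rfl, rfl⟩

/-- The vertices incident to an edge. -/
def support (G : MixedGraph V) : Set V := {v | ∃ w, G.adj v w}

/-- `G` is an ADMG without bidirected loops whose image under the cluster map `κ` is `H`. -/
structure Realizes (κ : V → W) (H : MixedGraph W) (G : MixedGraph V) : Prop where
  acyclic : G.Acyclic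
  bidir_irrefl : ∀ v, ¬ G.bidir v v
  map_eq : G.map κ = H

theorem markedEdge_congr {G : MixedGraph V} {G' : MixedGraph W} {a b : V} {a' b' : W} {ma mb : Bool}
    (hab : G.dir a b ↔ G'.dir a' b') (hba : G.dir b a ↔ G'.dir b' a')
    (hbi : G.bidir a b ↔ G'.bidir a' b') :
    G.MarkedEdge a b ma mb ↔ G'.MarkedEdge a' b' ma mb := by
  have hbi' : G.bidir b a ↔ G'.bidir b' a' :=
    ⟨fun h => G'.bidir_symm _ _ (hbi.1 (G.bidir_symm _ _ h)),
      fun h => G.bidir_symm _ _ (hbi.2 (G'.bidir_symm _ _ h))⟩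
  simp only [MarkedEdge, adj, intoHead, hab, hba, hbi, hbi']

section Deletion

variable {G : MixedGraph V} {F : V → V → Prop} {N Z : Set V} {x y : V} {ml mr : Bool} {p : List V}

theorem deleteBidir_isMarking_union (G : MixedGraph V) (F : V → V → Prop) : G.IsMarking
    (fun a b ma mb => G.MarkedEdge a b ma mb ∨ (G.deleteBidir F).MarkedEdge a b ma mb) where
  symm := fun h => h.imp (markedEdge_isMarking G).symm (markedEdge_isMarking _).symm
  dir_of_tail := fun h => h.elim (markedEdge_isMarking G).dir_of_tail
    (markedEdge_isMarking (G.deleteBidir F)).dir_of_tail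

theorem markedEdge_deleteBidir_iff {a b : V} {ma mb : Bool} (hab : ¬ F a b) (hba : ¬ F b a) :
    (G.deleteBidir F).MarkedEdge a b ma mb ↔ G.MarkedEdge a b ma mb :=
  markedEdge_congr Iff.rfl Iff.rfl (and_iff_left ⟨hab, hba⟩)

theorem markedEdge_deleteBidir_congr {F' : V → V → Prop} {a b : V} {ma mb : Bool}
    (hab : F a b ↔ F' a b) (hba : F b a ↔ F' b a) :
    (G.deleteBidir F).MarkedEdge a b ma mb ↔ (G.deleteBidir F').MarkedEdge a b ma mb :=
  markedEdge_congr Iff.rfl Iff.rfl (and_congr_right' (and_congr (not_congr hab) (not_congr hba)))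

theorem MarkedWalk.edges_ne {E : V → V → Bool → Bool → Prop}
    (h : MarkedWalk E N Z x ml y mr p) (hp : p.Nodup) :
    MarkedWalk (fun a b ma mb => E a b ma mb ∧ a ≠ b) N Z x ml y mr p := by
  induction h with
  | single hx => exact .single hx
  | cons hx hxy h ih =>
    obtain ⟨hxp, hp⟩ := List.nodup_cons.1 hp
    exact .cons hx ⟨hxy, fun heq => hxp (heq ▸ h.head_mem)⟩ (ih hp)

/-- On a path every edge can be kept or deleted independently of the others. -/
theorem MarkedWalk.exists_deleteBidir
    (h : MarkedWalk (fun a b ma mb => G.MarkedEdge a b ma mb ∨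
      (G.deleteBidir F).MarkedEdge a b ma mb) N Z x ml y mr p) (hp : p.Nodup) :
    ∃ F' : V → V → Prop, (∀ a b, F' a b → F a b ∧ a ∈ p ∧ b ∈ p) ∧
      MarkedWalk (G.deleteBidir F').MarkedEdge N Z x ml y mr p := by
  induction h with
  | single hx => exact ⟨fun _ _ => False, by simp, .single hx⟩
  | @cons x y z ml m m' mr p hx hxy h ih =>
    obtain ⟨hxp, hp⟩ := List.nodup_cons.1 hp
    obtain ⟨F', hF', hwalk⟩ := ih hp
    have hyp : y ∈ p := h.head_mem
    have hxF' : ∀ b, ¬ F' x b ∧ ¬ F' b x :=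
      fun b => ⟨fun hb => hxp (hF' _ _ hb).2.1, fun hb => hxp (hF' _ _ hb).2.2⟩
    have hcons : ∀ {v}, v ∈ p → v ∈ x :: p := List.mem_cons_of_mem x
    rcases hxy with hxy | hxy
    · exact ⟨F', fun a b hab => (hF' a b hab).imp_right (And.imp hcons hcons),
        .cons hx ((markedEdge_deleteBidir_iff (hxF' y).1 (hxF' y).2).2 hxy) hwalk⟩
    · refine ⟨fun a b => F' a b ∨ (F a b ∧ (a = x ∧ b = y ∨ a = y ∧ b = x)), ?_,
        .cons (y := y) (m' := m') hx ?_ ?_⟩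
      · rintro a b (hab | ⟨hF, ⟨rfl, rfl⟩ | ⟨rfl, rfl⟩⟩)
        · exact (hF' a b hab).imp_right (And.imp hcons hcons)
        · exact ⟨hF, List.mem_cons_self, hcons hyp⟩
        · exact ⟨hF, hcons hyp, List.mem_cons_self⟩
      · exact (markedEdge_deleteBidir_congr (by simp [hxF' y]) (by simp [hxF' y])).2 hxy
      · have hkeep : ∀ v ∈ p, v ≠ x := fun v hv heq => hxp (heq ▸ hv)
        exact hwalk.mono (fun _ _ _ _ => id) fun v hv w hw _ _ => (markedEdge_deleteBidir_congr
          (by simp [hkeep v hv, hkeep w hw]) (by simp [hkeep v hv, hkeep w hw])).1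

theorem WalkConnected.deleteBidir_eq {X Y Z : Set V} (h : G.WalkConnected X Y Z) :
    (G.deleteBidir Eq).WalkConnected X Y Z := by
  obtain ⟨x, hx, y, hy, p, hp⟩ := h
  obtain ⟨q, hq, hnodup, -⟩ := hp.exists_nodup (markedEdge_isMarking G)
  exact ⟨x, hx, y, hy, q, (hq.edges_ne hnodup).mono (fun _ _ _ _ => id) fun _ _ _ _ _ _ hvw =>
    (markedEdge_deleteBidir_iff hvw.2 hvw.2.symm).2 hvw.1⟩

end Deletion

section Map

variable {U : Type*} {G : MixedGraph V} {f : V → W} {g : W → V}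

theorem dir_map_iff (hf : Set.InjOn f G.support) {a b : V} (ha : a ∈ G.support)
    (hb : b ∈ G.support) : (G.map f).dir (f a) (f b) ↔ G.dir a b := by
  refine ⟨?_, fun h => ⟨a, b, h, rfl, rfl⟩⟩
  rintro ⟨a', b', h, ha', hb'⟩
  rwa [hf ha ⟨b', .inl h⟩ ha'.symm, hf hb ⟨a', .inr (.inl h)⟩ hb'.symm]

theorem bidir_map_iff (hf : Set.InjOn f G.support) {a b : V} (ha : a ∈ G.support)
    (hb : b ∈ G.support) : (G.map f).bidir (f a) (f b) ↔ G.bidir a b := by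
  refine ⟨?_, fun h => ⟨a, b, h, rfl, rfl⟩⟩
  rintro ⟨a', b', h, ha', hb'⟩
  rwa [hf ha ⟨b', .inr (.inr h)⟩ ha'.symm, hf hb ⟨a', .inr (.inr (G.bidir_symm _ _ h))⟩ hb'.symm]

theorem Realizes.map {κ : V → U} {κ' : W → U} {H : MixedGraph U} (h : Realizes κ H G)
    (hgf : Set.LeftInvOn g f G.support) (hκ : ∀ v, κ' (f v) = κ v) :
    Realizes κ' H (G.map f) where
  acyclic w hw := by
    refine h.acyclic (g w) (hw.lift g ?_)
    rintro _ _ ⟨a, b, hab, rfl, rfl⟩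
    rwa [Function.onFun, hgf ⟨b, .inl hab⟩, hgf ⟨a, .inr (.inl hab)⟩]
  bidir_irrefl := by
    rintro w ⟨a, b, hab, rfl, hb⟩
    obtain rfl : b = a :=
      hgf.injOn ⟨a, .inr (.inr (G.bidir_symm _ _ hab))⟩ ⟨b, .inr (.inr hab)⟩ hb
    exact h.bidir_irrefl b hab
  map_eq := by
    have hcomp : κ' ∘ f = κ := funext hκ
    rw [← h.map_eq]
    simp only [MixedGraph.map, Relation.map_map, hcomp]

theorem map_mem_ancestors {Z : Set V} {Z' : Set W} (hZ : Set.MapsTo f Z Z') {v : V}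
    (hv : v ∈ G.ancestors Z) : f v ∈ (G.map f).ancestors Z' := by
  obtain ⟨z, hz, hvz⟩ := hv
  exact ⟨f z, hZ hz, hvz.lift f fun a b hab => ⟨a, b, hab, rfl, rfl⟩⟩

theorem WalkConnected.map {X Y Z : Set W}
    (h : G.WalkConnected (f ⁻¹' X) (f ⁻¹' Y) (f ⁻¹' Z)) (hf : Set.InjOn f G.support) :
    (G.map f).WalkConnected X Y Z := by
  obtain ⟨x, hx, y, hy, p, hp⟩ := h
  refine ⟨f x, hx, f y, hy, _, hp.map f ?_ ?_⟩
  · exact fun _ _ _ _ hv => hv.imp (map_mem_ancestors (Set.mapsTo_preimage f Z)) id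
  · intro v _ w _ _ _ hvw
    have hv : v ∈ G.support := ⟨w, hvw.1⟩
    have hw : w ∈ G.support := ⟨v, ((markedEdge_isMarking G).symm hvw).1⟩
    exact (markedEdge_congr (dir_map_iff hf hv hw) (dir_map_iff hf hw hv)
      (bidir_map_iff hf hv hw)).2 hvw

end Map

variable {C : Type*}

/-! ### Shrinking a cluster to four vertices -/

/-- The data used to shrink the cluster `A` of `G` to the four representatives `rep i`, while
keeping a walk active given the clusters `Zc`: a topological order of `G` and the position
`ancRank` in it of the last vertex of `A` at which an active walk may have a collider. -/
structure Shrinking (κ : V → C) (A : C) (Zc : Set C) (G : MixedGraph V) where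
  rep : Fin 4 ↪ V
  map_rep : ∀ i, κ (rep i) = A
  rank : V → ℕ
  rank_lt : ∀ {a b}, G.dir a b → rank a < rank b
  bound : ℕ
  rank_lt_bound : ∀ v, rank v < bound
  ancRank : ℕ
  isGreatest_ancRank : (κ ⁻¹' {A} ∩ G.ancestors (κ ⁻¹' Zc)).Nonempty →
    IsGreatest (rank '' (κ ⁻¹' {A} ∩ G.ancestors (κ ⁻¹' Zc))) ancRank
  bidir_irrefl : ∀ v, ¬ G.bidir v v

namespace Shrinking

variable {κ : V → C} {A : C} {Zc : Set C} {G : MixedGraph V} (S : Shrinking κ A Zc G) {θ : ℕ}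

/-- The topological order of the shrunken graph: `rep 0` precedes and `rep 3` follows everything
else, `rep 1` takes over from the colliders and `rep 2` from a non-collider at position `θ`. -/
noncomputable def newRank (θ : ℕ) : V → ℕ :=
  Function.extend S.rep ![0, S.ancRank, θ, S.bound] S.rank

/-- `x'` may take the place of `x`: it is a representative if `x` lies in `A`, and `x` itself
otherwise. -/
def Replaces (x x' : V) : Prop := (κ x ≠ A ∧ x' = x) ∨ (κ x = A ∧ x' ∈ Set.range S.rep)

/-- The graph with all the edges that replacing the vertices of `A` by representatives can produce,
directed edges being required to respect `newRank`. -/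
def graph (θ : ℕ) : MixedGraph V where
  dir a b := S.newRank θ a < S.newRank θ b ∧
    ∃ a₀ b₀, G.dir a₀ b₀ ∧ S.Replaces a₀ a ∧ S.Replaces b₀ b
  bidir a b := a ≠ b ∧ ∃ a₀ b₀, G.bidir a₀ b₀ ∧ S.Replaces a₀ a ∧ S.Replaces b₀ b
  bidir_symm := fun _ _ ⟨hne, a₀, b₀, h, ha, hb⟩ => ⟨hne.symm, b₀, a₀, G.bidir_symm _ _ h, hb, ha⟩

/-- The pairs at `A` avoiding `rep 3`. The bidirected edges between them may be deleted, as those at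
`rep 3` suffice to realize every bidirected edge between clusters. -/
def Loose (a b : V) : Prop := (κ a = A ∨ κ b = A) ∧ a ≠ S.rep 3 ∧ b ≠ S.rep 3

/-- The marked edges of the graphs obtained from `S.graph θ` by deleting loose bidirected edges. -/
def Link (θ : ℕ) (a b : V) (ma mb : Bool) : Prop :=
  (S.graph θ).MarkedEdge a b ma mb ∨ ((S.graph θ).deleteBidir S.Loose).MarkedEdge a b ma mb

/-- `x'` can replace `x` on a walk whose edge at `x` has mark `m`, in the sense that the
orientation of this edge is compatible with `newRank`. -/
structure StandIn (θ : ℕ) (m : Bool) (x x' : V) : Prop where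
  replaces : S.Replaces x x'
  ne_sink : x' ≠ S.rep 3
  rank_le : m = true → S.rank x ≤ S.newRank θ x'
  le_rank : m = false → S.newRank θ x' ≤ S.rank x

variable {S} {a a' b b' u v x x' y z : V} {m ma mb ml mr mu mv my mz : Bool} {p : List V}
  {Xc Yc : Set C} {H : MixedGraph C}

theorem newRank_rep (i : Fin 4) :
    S.newRank θ (S.rep i) = (![0, S.ancRank, θ, S.bound] : Fin 4 → ℕ) i :=
  S.rep.injective.extend_apply _ _ i

theorem newRank_of_ne (hx : κ x ≠ A) : S.newRank θ x = S.rank x :=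
  Function.extend_apply' _ _ _ fun ⟨i, hi⟩ => hx (hi ▸ S.map_rep i)

theorem Replaces.map_eq (h : S.Replaces x x') : κ x' = κ x := by
  rcases h with ⟨-, rfl⟩ | ⟨hx, i, rfl⟩
  exacts [rfl, (S.map_rep i).trans hx.symm]

theorem replaces_self (hx : κ x ≠ A) : S.Replaces x x := .inl ⟨hx, rfl⟩

theorem replaces_rep (hx : κ x = A) (i : Fin 4) : S.Replaces x (S.rep i) := .inr ⟨hx, i, rfl⟩

theorem Replaces.eq_of_ne (h : S.Replaces x x') (hx' : κ x' ≠ A) : x = x' :=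
  h.elim (fun h => h.2.symm) fun h' => absurd (h.map_eq.trans h'.1) hx'

theorem exists_replaces_rank_le (S : Shrinking κ A Zc G) (θ : ℕ) (x : V) :
    ∃ x', S.Replaces x x' ∧ S.rank x ≤ S.newRank θ x' := by
  by_cases hx : κ x = A
  · exact ⟨S.rep 3, replaces_rep hx 3, (S.rank_lt_bound x).le.trans_eq (newRank_rep 3).symm⟩
  · exact ⟨x, replaces_self hx, (newRank_of_ne hx).ge⟩

theorem exists_replaces_le_rank (S : Shrinking κ A Zc G) (θ : ℕ) (x : V) :
    ∃ x', S.Replaces x x' ∧ S.newRank θ x' ≤ S.rank x := by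
  by_cases hx : κ x = A
  · exact ⟨S.rep 0, replaces_rep hx 0, (newRank_rep 0).trans_le (Nat.zero_le _)⟩
  · exact ⟨x, replaces_self hx, (newRank_of_ne hx).le⟩

theorem exists_replaces_not_loose (S : Shrinking κ A Zc G) (h : G.bidir x y) :
    ∃ x' y', S.Replaces x x' ∧ S.Replaces y y' ∧ x' ≠ y' ∧ ¬ S.Loose x' y' := by
  by_cases hx : κ x = A
  · by_cases hy : κ y = A
    · exact ⟨S.rep 0, S.rep 3, replaces_rep hx 0, replaces_rep hy 3,
        S.rep.injective.ne (by decide), fun h => h.2.2 rfl⟩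
    · refine ⟨S.rep 3, y, replaces_rep hx 3, replaces_self hy, ?_, fun h => h.2.1 rfl⟩
      rintro rfl
      exact hy (S.map_rep 3)
  · by_cases hy : κ y = A
    · refine ⟨x, S.rep 3, replaces_self hx, replaces_rep hy 3, ?_, fun h => h.2.2 rfl⟩
      rintro rfl
      exact hx (S.map_rep 3)
    · refine ⟨x, y, replaces_self hx, replaces_self hy, ?_, fun h => h.1.elim hx hy⟩
      rintro rfl
      exact S.bidir_irrefl x h

/-! ### Edges of the shrunken graph -/

theorem link_isMarking (θ : ℕ) : (S.graph θ).IsMarking (S.Link θ) :=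
  deleteBidir_isMarking_union _ _

theorem standIn_self (hx : κ x ≠ A) : S.StandIn θ m x x where
  replaces := replaces_self hx
  ne_sink := fun h => hx (h ▸ S.map_rep 3)
  rank_le _ := (newRank_of_ne hx).ge
  le_rank _ := (newRank_of_ne hx).le

theorem standIn_source (hx : κ x = A) : S.StandIn θ false x (S.rep 0) where
  replaces := replaces_rep hx 0
  ne_sink := S.rep.injective.ne (by decide)
  rank_le h := by cases h
  le_rank _ := (newRank_rep 0).trans_le (Nat.zero_le _)

theorem standIn_collider (hx : κ x = A) (h : S.rank x ≤ S.ancRank) :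
    S.StandIn θ true x (S.rep 1) where
  replaces := replaces_rep hx 1
  ne_sink := S.rep.injective.ne (by decide)
  rank_le _ := h.trans_eq (newRank_rep 1).symm
  le_rank h := by cases h

theorem standIn_chain_true (hx : κ x = A) (h : S.rank x ≤ θ) : S.StandIn θ true x (S.rep 2) where
  replaces := replaces_rep hx 2
  ne_sink := S.rep.injective.ne (by decide)
  rank_le _ := h.trans_eq (newRank_rep 2).symm
  le_rank h := by cases h

theorem standIn_chain_false (hx : κ x = A) (h : θ ≤ S.rank x) : S.StandIn θ false x (S.rep 2) where
  replaces := replaces_rep hx 2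
  ne_sink := S.rep.injective.ne (by decide)
  rank_le h := by cases h
  le_rank _ := (newRank_rep 2).trans_le h

theorem graph_acyclic (S : Shrinking κ A Zc G) (θ : ℕ) : (S.graph θ).Acyclic := fun _ hv =>
  lt_irrefl _ (Relation.TransGen.trans_induction_on (motive := fun {a b} _ =>
    S.newRank θ a < S.newRank θ b) hv (fun h => h.1) fun _ _ => lt_trans)

theorem dir_of_standIn (h : G.dir a b) (ha : S.StandIn θ false a a') (hb : S.StandIn θ true b b') :
    (S.graph θ).dir a' b' :=
  ⟨(ha.le_rank rfl).trans_lt ((S.rank_lt h).trans_le (hb.rank_le rfl)), a, b, h, ha.replaces,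
    hb.replaces⟩

theorem link_of_bidir (h : G.bidir a b) (ha : S.Replaces a a') (hb : S.Replaces b b')
    (hne : a' ≠ b') : S.Link θ a' b' true true := by
  have h' : (S.graph θ).bidir a' b' := ⟨hne, a, b, h, ha, hb⟩
  exact .inl ⟨.inr (.inr h'), by simp [intoHead, (S.graph θ).bidir_symm _ _ h'],
    by simp [intoHead, h']⟩

theorem link_of_dir (h : G.dir a b) (hbi : ¬ G.bidir a b) (ha : S.StandIn θ false a a')
    (hb : S.StandIn θ true b b') : S.Link θ a' b' false true := by
  have hdir := dir_of_standIn h ha hb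
  have hndir : ¬ (S.graph θ).dir b' a' := fun h => lt_asymm h.1 hdir.1
  have hnbidir : ¬ ((S.graph θ).deleteBidir S.Loose).bidir a' b' := by
    rintro ⟨⟨-, a₀, b₀, h₀, ha₀, hb₀⟩, hloose, -⟩
    have hoff : κ a' ≠ A ∧ κ b' ≠ A := not_or.1 fun h => hloose ⟨h, ha.ne_sink, hb.ne_sink⟩
    rw [ha₀.eq_of_ne hoff.1, hb₀.eq_of_ne hoff.2, ← ha.replaces.eq_of_ne hoff.1,
      ← hb.replaces.eq_of_ne hoff.2] at h₀
    exact hbi h₀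
  have hnbidir' := mt (((S.graph θ).deleteBidir S.Loose).bidir_symm b' a') hnbidir
  have hhead : ¬ ((S.graph θ).deleteBidir S.Loose).intoHead b' a' := not_or.2 ⟨hndir, hnbidir'⟩
  exact .inr ⟨.inl hdir, by simpa using hhead, iff_of_true rfl (.inl hdir)⟩

theorem markedEdge_cases (S : Shrinking κ A Zc G) (h : G.MarkedEdge a b ma mb) :
    (ma = true ∧ mb = true ∧ G.bidir a b) ∨ (ma = false ∧ mb = true ∧ G.dir a b ∧ ¬ G.bidir a b) ∨
      (ma = true ∧ mb = false ∧ G.dir b a ∧ ¬ G.bidir b a) := by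
  have hE := markedEdge_isMarking G
  have hbidir : ∀ {a b mb}, G.MarkedEdge a b false mb → ¬ G.bidir b a :=
    fun h hbi => by simpa [intoHead, hbi] using h.2.1
  cases ma with
  | false =>
    obtain ⟨hdir, rfl⟩ := hE.dir_of_tail h
    exact .inr (.inl ⟨rfl, rfl, hdir, mt (G.bidir_symm _ _) (hbidir h)⟩)
  | true =>
    cases mb with
    | false =>
      exact .inr (.inr ⟨rfl, rfl, (hE.dir_of_tail (hE.symm h)).1,
        mt (G.bidir_symm _ _) (hbidir (hE.symm h))⟩)
    | true =>
      refine .inl ⟨rfl, rfl, ?_⟩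
      rcases h.2.1.1 rfl with hba | hba
      · exact (h.2.2.1 rfl).resolve_left fun hab => lt_asymm (S.rank_lt hab) (S.rank_lt hba)
      · exact G.bidir_symm _ _ hba

theorem link_of_standIn (h : G.MarkedEdge a b ma mb) (ha : S.StandIn θ ma a a')
    (hb : S.StandIn θ mb b b') (hne : a' ≠ b') : S.Link θ a' b' ma mb := by
  rcases S.markedEdge_cases h with ⟨rfl, rfl, hbi⟩ | ⟨rfl, rfl, hdir, hbi⟩ | ⟨rfl, rfl, hdir, hbi⟩
  · exact link_of_bidir hbi ha.replaces hb.replaces hne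
  · exact link_of_dir hdir hbi ha hb
  · exact (link_isMarking θ).symm (link_of_dir hdir hbi hb ha)

theorem link_of_standIn_self (h : G.MarkedEdge a b ma mb) (ha : S.StandIn θ ma a a')
    (hb : κ b ≠ A) : S.Link θ a' b ma mb := by
  refine link_of_standIn h ha (standIn_self hb) ?_
  rintro rfl
  obtain rfl := ha.replaces.eq_of_ne hb
  rcases S.markedEdge_cases h with ⟨-, -, h⟩ | ⟨-, -, h, -⟩ | ⟨-, -, h, -⟩
  exacts [S.bidir_irrefl a h, lt_irrefl _ (S.rank_lt h), lt_irrefl _ (S.rank_lt h)]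

theorem link_source (h : G.MarkedEdge a b true mb) (ha : S.StandIn θ true a a')
    (ha' : a' ≠ S.rep 0) (hb : κ b = A) : S.Link θ a' (S.rep 0) true mb := by
  cases mb with
  | false => exact link_of_standIn h ha (standIn_source hb) ha'
  | true =>
    rcases S.markedEdge_cases h with ⟨-, -, hbi⟩ | ⟨hma, -⟩ | ⟨-, hmb, -⟩
    · exact link_of_bidir hbi ha.replaces (replaces_rep hb 0) ha'
    · cases hma
    · cases hmb

/-! ### Colliders of the shrunken graph -/

theorem rank_le_ancRank (hx : κ x = A) (hanc : x ∈ G.ancestors (κ ⁻¹' Zc)) : S.rank x ≤ S.ancRank :=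
  (S.isGreatest_ancRank ⟨x, hx, hanc⟩).2 ⟨x, ⟨hx, hanc⟩, rfl⟩

theorem rank_le_of_descendant (S : Shrinking κ A Zc G) (h : G.Descendant x y) :
    S.rank x ≤ S.rank y := by
  induction h with
  | refl => exact le_rfl
  | tail _ hyz ih => exact ih.trans (S.rank_lt hyz).le

theorem dir_collider (h : G.dir x y) (hx : κ x ≠ A) (hy : κ y = A)
    (hanc : y ∈ G.ancestors (κ ⁻¹' Zc)) : (S.graph θ).dir x (S.rep 1) :=
  dir_of_standIn h (standIn_self hx) (standIn_collider hy (rank_le_ancRank hy hanc))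

/-- Past the last vertex of `A` with a descendant in `Zc`, directed paths into `Zc` avoid `A`; the
other ones may be cut short at `rep 1`. -/
theorem mem_ancestors_of_lt (hx : x ∈ G.ancestors (κ ⁻¹' Zc)) (hxA : κ x ≠ A)
    (h : (κ ⁻¹' {A} ∩ G.ancestors (κ ⁻¹' Zc)).Nonempty →
      S.rep 1 ∈ (S.graph θ).ancestors (κ ⁻¹' Zc) ∨ S.ancRank < S.rank x) :
    x ∈ (S.graph θ).ancestors (κ ⁻¹' Zc) := by
  obtain ⟨z, hz, hxz⟩ := hx
  induction hxz using Relation.ReflTransGen.head_induction_on with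
  | refl => exact ⟨z, hz, .refl⟩
  | @head x y hxy hyz ih =>
    have hy : y ∈ G.ancestors (κ ⁻¹' Zc) := ⟨z, hz, hyz⟩
    suffices ∃ y', (S.graph θ).dir x y' ∧ y' ∈ (S.graph θ).ancestors (κ ⁻¹' Zc) by
      obtain ⟨y', hxy', d, hd, hy'd⟩ := this
      exact ⟨d, hd, .head hxy' hy'd⟩
    by_cases hyA : κ y = A
    · refine ⟨S.rep 1, dir_collider hxy hxA hyA hy, (h ⟨y, hyA, hy⟩).resolve_right ?_⟩
      exact not_lt.2 ((S.rank_lt hxy).le.trans (rank_le_ancRank hyA hy))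
    · exact ⟨y, dir_of_standIn hxy (standIn_self hxA) (standIn_self hyA),
        ih hyA fun hne => (h hne).imp_right fun h => h.trans (S.rank_lt hxy)⟩

theorem collider_mem_ancestors (hne : (κ ⁻¹' {A} ∩ G.ancestors (κ ⁻¹' Zc)).Nonempty) :
    S.rep 1 ∈ (S.graph θ).ancestors (κ ⁻¹' Zc) := by
  obtain ⟨d, ⟨hdA, z, hz, hdz⟩, hd⟩ := (S.isGreatest_ancRank hne).1
  rcases Relation.ReflTransGen.cases_head hdz with rfl | ⟨y, hdy, hyz⟩
  · exact ⟨S.rep 1, by rwa [Set.mem_preimage, S.map_rep, ← hdA], .refl⟩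
  · have hlt : S.ancRank < S.rank y := hd ▸ S.rank_lt hdy
    have hy : y ∈ G.ancestors (κ ⁻¹' Zc) := ⟨z, hz, hyz⟩
    have hyA : κ y ≠ A := fun hyA => (rank_le_ancRank hyA hy).not_gt hlt
    obtain ⟨z', hz', hyz'⟩ := mem_ancestors_of_lt hy hyA fun _ => .inr hlt
    refine ⟨z', hz', .head ⟨?_, d, y, hdy, replaces_rep hdA 1, replaces_self hyA⟩ hyz'⟩
    rwa [newRank_rep, newRank_of_ne hyA]

theorem passes_self (hx : κ x ≠ A) (h : Passes (G.ancestors (κ ⁻¹' Zc)) (κ ⁻¹' Zc) x ml mr) :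
    Passes ((S.graph θ).ancestors (κ ⁻¹' Zc)) (κ ⁻¹' Zc) x ml mr :=
  h.imp (f := id)
    (fun h => mem_ancestors_of_lt h hx fun hne => .inl (collider_mem_ancestors hne)) id

theorem rep_notMem (hA : A ∉ Zc) (i : Fin 4) : S.rep i ∉ κ ⁻¹' Zc := by
  rwa [Set.mem_preimage, S.map_rep]

/-! ### Replacing a stretch of a walk inside the cluster -/

/-- The shrunken graph has a walk from `x` to `y`, active given the clusters `Zc`, up to deleting
loose bidirected edges. -/
abbrev Joins (S : Shrinking κ A Zc G) (θ : ℕ) (x : V) (ml : Bool) (y : V) (mr : Bool) : Prop :=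
  (S.graph θ).Reaches (S.Link θ) (κ ⁻¹' Zc) x ml y mr

theorem joins_rep (hA : A ∉ Zc) (i : Fin 4) (h : (ml && mr) = false) :
    S.Joins θ (S.rep i) ml (S.rep i) mr :=
  ⟨_, .single (by rw [Passes, h]; exact rep_notMem hA i)⟩

/-- The marked edges of `G` other than the directed edges from their first vertex into `A`. -/
def NotInto (κ : V → C) (A : C) (G : MixedGraph V) (a b : V) (ma mb : Bool) : Prop :=
  G.MarkedEdge a b ma mb ∧ ¬ (ma = false ∧ κ b = A)

/-- A walk that enters `A` through no directed edge may end at `rep 0` as soon as it meets `A`. -/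
theorem exists_link_joins_source (hA : A ∉ Zc) (hv : κ v = A)
    (h : MarkedWalk (NotInto κ A G) (G.ancestors (κ ⁻¹' Zc)) (κ ⁻¹' Zc) z mz v false p)
    (hx : S.StandIn θ m x x') (hx' : x' ≠ S.rep 0) (hxz : NotInto κ A G x z m mz) :
    ∃ y my, S.Link θ x' y m my ∧ S.Joins θ y my (S.rep 0) false := by
  have hentry : ∀ {x x' m z mz}, S.StandIn θ m x x' → x' ≠ S.rep 0 → NotInto κ A G x z m mz →
      κ z = A → ∃ y my, S.Link θ x' y m my ∧ S.Joins θ y my (S.rep 0) false := by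
    intro x x' m z mz hx hx' hxz hz
    obtain rfl : m = true := by_contra fun hm => hxz.2 ⟨Bool.eq_false_of_not_eq_true hm, hz⟩
    exact ⟨S.rep 0, mz, link_source hxz.1 hx hx' hz, joins_rep hA 0 (Bool.and_false mz)⟩
  generalize hmr : false = mr at h
  induction h generalizing x x' m with
  | single =>
    subst hmr
    exact hentry hx hx' hxz hv
  | @cons z w v mz k k' mr p hz hzw _ ih =>
    subst hmr
    by_cases hzA : κ z = A
    · exact hentry hx hx' hxz hzA
    · have hz0 : z ≠ S.rep 0 := fun h => hzA (h ▸ S.map_rep 0)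
      obtain ⟨y, my, hzy, q, hq⟩ := ih hv (standIn_self hzA) hz0 hzw rfl
      exact ⟨z, mz, link_of_standIn_self hxz.1 hx hzA, _, .cons (passes_self hzA hz) hzy hq⟩

/-- After its last directed entry into `A`, at `x`, a walk that leaves `A` through a tail can be
continued from any stand-in `x'` for `x`. -/
theorem exists_joins_of_notInto (hA : A ∉ Zc) (hv : κ v = A)
    (h : MarkedWalk (NotInto κ A G) (G.ancestors (κ ⁻¹' Zc)) (κ ⁻¹' Zc) x ml v false p) :
    ∃ mr, ∀ {θ x' m}, S.StandIn θ mr x x' → x' ≠ S.rep 0 →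
      Passes ((S.graph θ).ancestors (κ ⁻¹' Zc)) (κ ⁻¹' Zc) x' m mr →
        ∃ v', S.StandIn θ false v v' ∧ S.Joins θ x' m v' false := by
  cases h with
  | single _ => exact ⟨false, fun hx' _ hpass => ⟨_, hx', _, .single hpass⟩⟩
  | @cons _ z _ _ mr mz _ p _ hxz h =>
    refine ⟨mr, fun hx' hne hpass => ?_⟩
    obtain ⟨y, my, hxy, q, hq⟩ := exists_link_joins_source hA hv h hx' hne hxz
    exact ⟨S.rep 0, standIn_source hv, _, .cons hpass hxy hq⟩

/-- The last directed entry into `A` precedes all colliders of `A` in the topological order, because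
from there the walk descends to a collider or to its end. -/
theorem exists_last_entry (S : Shrinking κ A Zc G) (hu : κ u = A)
    (h : MarkedWalk G.MarkedEdge (G.ancestors (κ ⁻¹' Zc)) (κ ⁻¹' Zc) u true v false p)
    (hlt : S.rank v < S.rank u) :
    ∃ x, κ x = A ∧ S.rank x ≤ S.ancRank ∧ G.Reaches (NotInto κ A G) (κ ⁻¹' Zc) x true v false ∧
      (S.rank u ≤ S.rank x ∨ ∃ y, y ∉ κ ⁻¹' Zc ∧ G.MarkedEdge x y true false) := by
  have hE := markedEdge_isMarking G
  have hu_le : S.rank u ≤ S.ancRank := rank_le_ancRank hu <|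
    (h.mem_ancestors_or_descendant hE).resolve_right fun hdesc =>
      hlt.not_ge (S.rank_le_of_descendant hdesc.2)
  rcases h.exists_last_edge fun _ b ma _ => ma = false ∧ κ b = A with
    hreach | ⟨y, _, x, mx, ⟨_, hy⟩, hyx, ⟨rfl, hx⟩, hreach⟩
  · exact ⟨u, hu, hu_le, hreach, .inl le_rfl⟩
  · obtain rfl : mx = true := (hE.dir_of_tail hyx).2
    refine ⟨x, hx, ?_, hreach, .inr ⟨y, hy.notMem_of_false_right, hE.symm hyx⟩⟩
    obtain ⟨q, hq⟩ := hreach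
    rcases (hq.mono (fun _ _ _ _ => id) fun _ _ _ _ _ _ => And.left).mem_ancestors_or_descendant hE
      with hanc | ⟨-, hdesc⟩
    · exact rank_le_ancRank hx hanc
    · exact (S.rank_le_of_descendant hdesc).trans (hlt.le.trans hu_le)

/-- Continuing from the last directed entry `x` into `A`: if the walk has a collider at `x`, it may
start at `rep 1` directly. Otherwise it must continue from `rep 2`, which may also serve as the
start if `u` comes no later than `x`, while if not, the collider `rep 1` is joined to `rep 2`
through the last edge into `x`. -/
theorem exists_joins_of_rank_lt (S : Shrinking κ A Zc G) (hu : κ u = A) (hv : κ v = A)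
    (h : MarkedWalk G.MarkedEdge (G.ancestors (κ ⁻¹' Zc)) (κ ⁻¹' Zc) u true v false p)
    (hlt : S.rank v < S.rank u) :
    ∃ θ u' v', S.StandIn θ true u u' ∧ S.StandIn θ false v v' ∧ S.Joins θ u' true v' false := by
  have hE := markedEdge_isMarking G
  have hA : A ∉ Zc := hv ▸ h.notMem_of_false_right
  have hanc : u ∈ G.ancestors (κ ⁻¹' Zc) := (h.mem_ancestors_or_descendant hE).resolve_right
    fun hdesc => hlt.not_ge (S.rank_le_of_descendant hdesc.2)
  have huc : ∀ {θ}, S.StandIn θ true u (S.rep 1) := standIn_collider hu (rank_le_ancRank hu hanc)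
  have hpass : ∀ {θ}, Passes ((S.graph θ).ancestors (κ ⁻¹' Zc)) (κ ⁻¹' Zc) (S.rep 1) true true :=
    collider_mem_ancestors ⟨u, hu, hanc⟩
  have hpass2 : ∀ {θ m}, Passes ((S.graph θ).ancestors (κ ⁻¹' Zc)) (κ ⁻¹' Zc) (S.rep 2) m false :=
    passes_false_right.2 (rep_notMem hA 2)
  have hne : ∀ i, i ≠ 0 → S.rep i ≠ S.rep 0 := fun i hi => S.rep.injective.ne hi
  obtain ⟨x, hx, hx_le, ⟨q, hq⟩, hxu⟩ := S.exists_last_entry hu h hlt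
  obtain ⟨mr, hcont⟩ := exists_joins_of_notInto hA hv hq
  cases mr with
  | true =>
    obtain ⟨v', hv', hjoin⟩ := hcont (θ := 0) (standIn_collider hx hx_le) (hne 1 (by decide)) hpass
    exact ⟨0, _, v', huc, hv', hjoin⟩
  | false =>
    rcases hxu with hle | ⟨y, hy, hxy⟩
    · obtain ⟨v', hv', hjoin⟩ := hcont (standIn_chain_false hx le_rfl) (hne 2 (by decide)) hpass2
      exact ⟨_, _, v', standIn_chain_true hu hle, hv', hjoin⟩
    by_cases hyA : κ y = A
    · have hrank : S.rank y ≤ S.rank x := (S.rank_lt (hE.dir_of_tail (hE.symm hxy)).1).le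
      obtain ⟨v', hv', q, hq⟩ := hcont (standIn_chain_false hx hrank) (hne 2 (by decide)) hpass2
      exact ⟨_, _, v', huc, hv', _, .cons hpass (link_of_standIn hxy (standIn_collider hx hx_le)
        (standIn_chain_false hyA le_rfl) (S.rep.injective.ne (by decide))) hq⟩
    · obtain ⟨v', hv', q, hq⟩ := hcont (standIn_chain_false hx le_rfl) (hne 2 (by decide)) hpass2
      exact ⟨_, _, v', huc, hv', _, .cons hpass
        (link_of_standIn_self hxy (standIn_collider hx hx_le) hyA)
        (.cons (passes_false_right.2 hy) ((link_isMarking _).symm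
          (link_of_standIn_self hxy (standIn_chain_true hx le_rfl) hyA)) hq)⟩

theorem exists_joins_true_false (S : Shrinking κ A Zc G) (hu : κ u = A) (hv : κ v = A)
    (h : G.Reaches G.MarkedEdge (κ ⁻¹' Zc) u true v false) :
    ∃ θ u' v', S.StandIn θ true u u' ∧ S.StandIn θ false v v' ∧ S.Joins θ u' true v' false := by
  obtain ⟨p, h⟩ := h
  rcases lt_or_ge (S.rank v) (S.rank u) with hlt | hle
  · exact S.exists_joins_of_rank_lt hu hv h hlt
  · exact ⟨_, _, _, standIn_chain_true hu hle, standIn_chain_false hv le_rfl,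
      joins_rep (hv ▸ h.notMem_of_false_right) 2 rfl⟩

theorem exists_joins_of_reaches (S : Shrinking κ A Zc G) (hu : κ u = A) (hv : κ v = A)
    (h : G.Reaches G.MarkedEdge (κ ⁻¹' Zc) u mu v mv) :
    ∃ θ u' v', S.StandIn θ mu u u' ∧ S.StandIn θ mv v v' ∧ S.Joins θ u' mu v' mv := by
  have hE := markedEdge_isMarking G
  cases mu with
  | true =>
    cases mv with
    | true =>
      obtain ⟨p, h⟩ := h
      have hanc : ∀ {x y q}, MarkedWalk G.MarkedEdge (G.ancestors (κ ⁻¹' Zc)) (κ ⁻¹' Zc)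
          x true y true q → x ∈ G.ancestors (κ ⁻¹' Zc) :=
        fun h => (h.mem_ancestors_or_descendant hE).resolve_right fun h => by cases h.1
      exact ⟨0, _, _, standIn_collider hu (rank_le_ancRank hu (hanc h)),
        standIn_collider hv (rank_le_ancRank hv (hanc (h.reverse hE))),
        _, .single (collider_mem_ancestors ⟨u, hu, hanc h⟩)⟩
    | false => exact S.exists_joins_true_false hu hv h
  | false =>
    cases mv with
    | true =>
      obtain ⟨θ, v', u', hv', hu', hjoin⟩ := S.exists_joins_true_false hv hu (h.symm hE)
      exact ⟨θ, u', v', hu', hv', hjoin.symm (link_isMarking θ)⟩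
    | false =>
      obtain ⟨p, h⟩ := h
      exact ⟨0, _, _, standIn_source hu, standIn_source hv,
        joins_rep (hu ▸ h.notMem_of_false_left) 0 rfl⟩

/-! ### Realizing the cluster graph on four representatives -/

theorem markedWalk_link_of_off
    (h : MarkedWalk G.MarkedEdge (G.ancestors (κ ⁻¹' Zc)) (κ ⁻¹' Zc) x ml y mr p)
    (hoff : ∀ w ∈ p, κ w ≠ A) :
    MarkedWalk (S.Link θ) ((S.graph θ).ancestors (κ ⁻¹' Zc)) (κ ⁻¹' Zc) x ml y mr p :=
  h.mono (fun w hw _ _ => passes_self (hoff w hw)) fun w hw w' hw' _ _ hww' =>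
    link_of_standIn_self hww' (standIn_self (hoff w hw)) (hoff w' hw')

theorem Joins.exists_extension (h : S.Joins θ a ml x' m) (hx : S.StandIn θ m x x')
    (hxy : (x = y ∧ m = my) ∨ ∃ z mz q, G.MarkedEdge x z m mz ∧
      MarkedWalk G.MarkedEdge (G.ancestors (κ ⁻¹' Zc)) (κ ⁻¹' Zc) z mz y my q ∧
        ∀ w ∈ q, κ w ≠ A) :
    ∃ y', κ y' = κ y ∧ S.Joins θ a ml y' my := by
  rcases hxy with ⟨rfl, rfl⟩ | ⟨z, mz, q, hxz, hq, hoff⟩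
  · exact ⟨x', hx.replaces.map_eq, h⟩
  · obtain ⟨p, hp⟩ := h
    exact ⟨y, rfl, _, hp.append (link_of_standIn_self hxz hx (hoff z hq.head_mem))
      (markedWalk_link_of_off hq hoff)⟩

theorem exists_joins_of_walkConnected (S : Shrinking κ A Zc G)
    (h : G.WalkConnected (κ ⁻¹' Xc) (κ ⁻¹' Yc) (κ ⁻¹' Zc)) :
    ∃ θ, ∃ x ∈ κ ⁻¹' Xc, ∃ y ∈ κ ⁻¹' Yc, S.Joins θ x false y false := by
  obtain ⟨x, hx, y, hy, p, hp⟩ := h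
  rcases hp.exists_last_visit (κ ⁻¹' {A}) with hoff | ⟨v, hv, mv, hxv, hvy⟩
  · exact ⟨0, x, hx, y, hy, p, markedWalk_link_of_off hp hoff⟩
  obtain ⟨q, hq⟩ := hxv.symm (markedEdge_isMarking G)
  rcases hq.exists_last_visit (κ ⁻¹' {A}) with hoff | ⟨u, hu, mu, hvu, hux⟩
  · exact absurd hv (hoff v hq.head_mem)
  obtain ⟨θ, v', u', hv', hu', hjoin⟩ := S.exists_joins_of_reaches hv hu hvu
  obtain ⟨x', hx', hjoin⟩ := hjoin.exists_extension hu' <|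
    hux.imp_right fun ⟨z, mz, q, huz, hq, _, _, hoff⟩ => ⟨z, mz, q, huz, hq, hoff⟩
  obtain ⟨y', hy', hjoin⟩ := Joins.exists_extension (hjoin.symm (link_isMarking θ)) hv' <|
    hvy.imp_right fun ⟨z, mz, q, hvz, hq, _, _, hoff⟩ => ⟨z, mz, q, hvz, hq, hoff⟩
  exact ⟨θ, x', by rwa [Set.mem_preimage, hx'], y', by rwa [Set.mem_preimage, hy'], hjoin⟩

theorem realizes_graph_deleteBidir (S : Shrinking κ A Zc G) (hmap : G.map κ = H) (θ : ℕ)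
    {F : V → V → Prop} (hF : ∀ a b, F a b → S.Loose a b) :
    Realizes κ H ((S.graph θ).deleteBidir F) where
  acyclic := S.graph_acyclic θ
  bidir_irrefl v hv := hv.1.1 rfl
  map_eq := by
    rw [← hmap]
    refine MixedGraph.ext (fun B D => ⟨?_, ?_⟩) fun B D => ⟨?_, ?_⟩
    · rintro ⟨a, b, ⟨-, a₀, b₀, h, ha, hb⟩, rfl, rfl⟩
      exact ⟨a₀, b₀, h, ha.map_eq.symm, hb.map_eq.symm⟩
    · rintro ⟨a₀, b₀, h, rfl, rfl⟩
      obtain ⟨a, ha, ha_le⟩ := S.exists_replaces_le_rank θ a₀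
      obtain ⟨b, hb, hb_ge⟩ := S.exists_replaces_rank_le θ b₀
      exact ⟨a, b, ⟨ha_le.trans_lt ((S.rank_lt h).trans_le hb_ge), a₀, b₀, h, ha, hb⟩,
        ha.map_eq, hb.map_eq⟩
    · rintro ⟨a, b, ⟨⟨-, a₀, b₀, h, ha, hb⟩, -⟩, rfl, rfl⟩
      exact ⟨a₀, b₀, h, ha.map_eq.symm, hb.map_eq.symm⟩
    · rintro ⟨a₀, b₀, h, rfl, rfl⟩
      obtain ⟨a, b, ha, hb, hne, hloose⟩ := S.exists_replaces_not_loose h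
      exact ⟨a, b, ⟨⟨hne, a₀, b₀, h, ha, hb⟩, fun h => hloose (hF a b h),
        fun h => hloose ((hF b a h).imp Or.symm And.symm)⟩, ha.map_eq, hb.map_eq⟩

theorem mem_support_graph (h : v ∈ (S.graph θ).support) :
    v ∈ Set.range S.rep ∨ (κ v ≠ A ∧ v ∈ G.support) := by
  obtain ⟨v₀, w₀, hadj, hv⟩ : ∃ v₀ w₀, G.adj v₀ w₀ ∧ S.Replaces v₀ v := by
    obtain ⟨w, ⟨-, v₀, w₀, h, hv, -⟩ | ⟨-, w₀, v₀, h, -, hv⟩ | ⟨-, v₀, w₀, h, hv, -⟩⟩ := h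
    exacts [⟨v₀, w₀, .inl h, hv⟩, ⟨v₀, w₀, .inr (.inl h), hv⟩, ⟨v₀, w₀, .inr (.inr h), hv⟩]
  rcases hv with ⟨hvA, rfl⟩ | ⟨-, hrep⟩
  exacts [.inr ⟨hvA, w₀, hadj⟩, .inl hrep]

end Shrinking

section Reduction

variable {κ : V → C} {A : C} {Xc Yc Zc : Set C} {G : MixedGraph V} {H : MixedGraph C}

theorem Acyclic.exists_rank [Finite V] (h : G.Acyclic) :
    ∃ rank : V → ℕ, ∀ {a b}, G.dir a b → rank a < rank b := by
  refine ⟨fun v => {w | Relation.TransGen G.dir w v}.ncard, fun {a b} hab => ?_⟩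
  refine Set.ncard_lt_ncard ((Set.ssubset_iff_of_subset ?_).2 ⟨a, .single hab, h a⟩)
  exact fun w hw => .tail hw hab

theorem Acyclic.exists_shrinking [Finite V] (hG : G.Acyclic) (hbidir : ∀ v, ¬ G.bidir v v)
    (Zc : Set C) (rep : Fin 4 ↪ V) (hrep : ∀ i, κ (rep i) = A) :
    ∃ S : Shrinking κ A Zc G, S.rep = rep := by
  obtain ⟨rank, hrank⟩ := hG.exists_rank
  obtain ⟨bound, hbound⟩ := (Set.finite_range rank).bddAbove
  have hanc : BddAbove (rank '' (κ ⁻¹' {A} ∩ G.ancestors (κ ⁻¹' Zc))) := (Set.toFinite _).bddAbove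
  exact ⟨⟨rep, hrep, rank, hrank, bound + 1, fun v => Nat.lt_succ_of_le (hbound ⟨v, rfl⟩), _,
    fun hne => ⟨Nat.sSup_mem (hne.image rank) hanc, fun _ => le_csSup hanc⟩, hbidir⟩, rfl⟩

theorem Realizes.exists_support_rep [Finite V] (h : Realizes κ H G)
    (hconn : G.WalkConnected (κ ⁻¹' Xc) (κ ⁻¹' Yc) (κ ⁻¹' Zc)) (rep : Fin 4 ↪ V)
    (hrep : ∀ i, κ (rep i) = A) :
    ∃ G', Realizes κ H G' ∧ G'.WalkConnected (κ ⁻¹' Xc) (κ ⁻¹' Yc) (κ ⁻¹' Zc) ∧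
      ∀ v ∈ G'.support, v ∈ Set.range rep ∨ (κ v ≠ A ∧ v ∈ G.support) := by
  obtain ⟨S, rfl⟩ := h.acyclic.exists_shrinking h.bidir_irrefl Zc rep hrep
  obtain ⟨θ, x, hx, y, hy, p, hp⟩ := S.exists_joins_of_walkConnected hconn
  obtain ⟨q, hq, hnodup, -⟩ := hp.exists_nodup (Shrinking.link_isMarking θ)
  obtain ⟨F, hF, hwalk⟩ := hq.exists_deleteBidir hnodup
  refine ⟨_, S.realizes_graph_deleteBidir h.map_eq θ fun a b hab => (hF a b hab).1,
    ⟨x, hx, y, hy, q, hwalk⟩, fun v ⟨w, hvw⟩ => Shrinking.mem_support_graph (θ := θ) ⟨w, ?_⟩⟩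
  exact hvw.imp_right (Or.imp_right And.left)

theorem Realizes.exists_support_subset [Finite V] {K : Set V}
    (hK : ∀ A, κ ⁻¹' {A} ⊆ K ∨ ∃ rep : Fin 4 ↪ V, ∀ i, κ (rep i) = A ∧ rep i ∈ K)
    (h : Realizes κ H G) (hconn : G.WalkConnected (κ ⁻¹' Xc) (κ ⁻¹' Yc) (κ ⁻¹' Zc)) :
    ∃ G', Realizes κ H G' ∧ G'.WalkConnected (κ ⁻¹' Xc) (κ ⁻¹' Yc) (κ ⁻¹' Zc) ∧
      G'.support ⊆ K := by
  suffices ∀ s : Finset C, ∃ G', Realizes κ H G' ∧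
      G'.WalkConnected (κ ⁻¹' Xc) (κ ⁻¹' Yc) (κ ⁻¹' Zc) ∧ ∀ v ∈ G'.support, κ v ∈ s → v ∈ K by
    obtain ⟨G', hG', hconn', hsupp⟩ := this (Set.finite_range κ).toFinset
    exact ⟨G', hG', hconn', fun v hv => hsupp v hv (by simp)⟩
  intro s
  induction s using Finset.cons_induction with
  | empty => exact ⟨G, h, hconn, by simp⟩
  | cons A s _ ih =>
    obtain ⟨G', hG', hconn', hsupp⟩ := ih
    simp only [Finset.mem_cons]
    rcases hK A with hA | ⟨rep, hrep⟩
    · exact ⟨G', hG', hconn', fun v hv hvA => hvA.elim (fun h => hA h) (hsupp v hv)⟩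
    · obtain ⟨G'', hG'', hconn'', hsupp'⟩ :=
        hG'.exists_support_rep hconn' rep fun i => (hrep i).1
      refine ⟨G'', hG'', hconn'', fun v hv hvA => ?_⟩
      rcases hsupp' v hv with ⟨i, rfl⟩ | ⟨hne, hv'⟩
      exacts [(hrep i).2, hsupp v hv' (hvA.resolve_left hne)]

end Reduction

end MixedGraph

namespace ClusterDAG

open MixedGraph

variable {C : Type*}

section Realizes

variable {GC : ClusterDAG C} {G : MixedGraph GC.MicroV}

theorem Compatible.realizes (h : GC.Compatible G) :
    Realizes Sigma.fst GC.graph (G.deleteBidir Eq) := by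
  obtain ⟨hacyclic, hdir, hbidir, hdirLoop, hbidirLoop⟩ := h
  refine ⟨hacyclic, fun v hv => hv.2.1 rfl, MixedGraph.ext (fun A B => ⟨?_, fun hAB => ?_⟩)
    fun A B => ⟨?_, fun hAB => ?_⟩⟩
  · rintro ⟨⟨A, i⟩, ⟨B, j⟩, hij, rfl, rfl⟩
    rcases eq_or_ne A B with rfl | hne
    · refine (hdirLoop A).2 ⟨i, j, ?_, hij⟩
      rintro rfl
      exact hacyclic _ (.single hij)
    · exact (hdir A B hne).2 ⟨i, j, hij⟩
  · rcases eq_or_ne A B with rfl | hne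
    · obtain ⟨i, j, -, hij⟩ := (hdirLoop A).1 hAB
      exact ⟨_, _, hij, rfl, rfl⟩
    · obtain ⟨i, j, hij⟩ := (hdir A B hne).1 hAB
      exact ⟨_, _, hij, rfl, rfl⟩
  · rintro ⟨⟨A, i⟩, ⟨B, j⟩, ⟨hij, hne, -⟩, rfl, rfl⟩
    rcases eq_or_ne A B with rfl | hAB
    · refine (hbidirLoop A).2 ⟨i, j, ?_, hij⟩
      rintro rfl
      exact hne rfl
    · exact (hbidir A B hAB).2 ⟨i, j, hij⟩
  · rcases eq_or_ne A B with rfl | hne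
    · obtain ⟨i, j, hne, hij⟩ := (hbidirLoop A).1 hAB
      have hne' : (⟨A, i⟩ : GC.MicroV) ≠ ⟨A, j⟩ := fun heq => hne (by simpa using heq)
      exact ⟨_, _, ⟨hij, hne', hne'.symm⟩, rfl, rfl⟩
    · obtain ⟨i, j, hij⟩ := (hbidir A B hne).1 hAB
      exact ⟨_, _, ⟨hij, fun heq => hne (congrArg Sigma.fst heq),
        fun heq => hne (congrArg Sigma.fst heq).symm⟩, rfl, rfl⟩

theorem compatible_of_realizes (h : Realizes Sigma.fst GC.graph G) : GC.Compatible G := by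
  have hdir : ∀ A B, GC.graph.dir A B ↔ ∃ i j, G.dir ⟨A, i⟩ ⟨B, j⟩ := by
    rw [← h.map_eq]
    refine fun A B => ⟨?_, fun ⟨i, j, hij⟩ => ⟨_, _, hij, rfl, rfl⟩⟩
    rintro ⟨⟨A, i⟩, ⟨B, j⟩, hij, rfl, rfl⟩
    exact ⟨i, j, hij⟩
  have hbidir : ∀ A B, GC.graph.bidir A B ↔ ∃ i j, G.bidir ⟨A, i⟩ ⟨B, j⟩ := by
    rw [← h.map_eq]
    refine fun A B => ⟨?_, fun ⟨i, j, hij⟩ => ⟨_, _, hij, rfl, rfl⟩⟩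
    rintro ⟨⟨A, i⟩, ⟨B, j⟩, hij, rfl, rfl⟩
    exact ⟨i, j, hij⟩
  refine ⟨h.acyclic, fun A B _ => hdir A B, fun A B _ => hbidir A B, fun A => (hdir A A).trans ?_,
    fun A => (hbidir A A).trans ?_⟩
  · refine exists₂_congr fun i j => (and_iff_right_of_imp ?_).symm
    rintro hij rfl
    exact h.acyclic _ (.single hij)
  · refine exists₂_congr fun i j => (and_iff_right_of_imp ?_).symm
    rintro hij rfl
    exact h.bidir_irrefl _ hij

theorem exists_compatible_iff_exists_realizes {Xc Yc Zc : Set C} (hXZ : Disjoint Xc Zc)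
    (hYZ : Disjoint Yc Zc) :
    (∃ G, GC.Compatible G ∧ G.DConnected (GC.microSet Xc) (GC.microSet Yc) (GC.microSet Zc)) ↔
      ∃ G : MixedGraph GC.MicroV, Realizes Sigma.fst GC.graph G ∧
        G.WalkConnected (Sigma.fst ⁻¹' Xc) (Sigma.fst ⁻¹' Yc) (Sigma.fst ⁻¹' Zc) := by
  constructor
  · rintro ⟨G, hG, hconn⟩
    exact ⟨_, hG.realizes,
      (hconn.walkConnected (hXZ.preimage Sigma.fst) (hYZ.preimage Sigma.fst)).deleteBidir_eq⟩
  · rintro ⟨G, hG, hconn⟩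
    exact ⟨G, compatible_of_realizes hG, hconn.dConnected⟩

end Realizes

variable (GC : ClusterDAG C)

/-- The variables of the truncated cluster-DAG, as the first variables of each cluster. -/
def ofTruncate4 (v : GC.truncate4.MicroV) : GC.MicroV := ⟨v.1, Fin.castLE (min_le_left _ _) v.2⟩

/-- A retraction of `ofTruncate4`, reducing the indices modulo 4. -/
def toTruncate4 (v : GC.MicroV) : GC.truncate4.MicroV :=
  ⟨v.1, v.2 % 4, lt_min ((Nat.mod_le _ _).trans_lt v.2.2) (Nat.mod_lt _ (by norm_num))⟩

theorem toTruncate4_ofTruncate4 (v : GC.truncate4.MicroV) :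
    GC.toTruncate4 (GC.ofTruncate4 v) = v :=
  Sigma.ext rfl (heq_of_eq (Fin.ext (Nat.mod_eq_of_lt (v.2.2.trans_le (min_le_right _ _)))))

theorem ofTruncate4_toTruncate4 {v : GC.MicroV} (hv : (v.2 : ℕ) < 4) :
    GC.ofTruncate4 (GC.toTruncate4 v) = v :=
  Sigma.ext rfl (heq_of_eq (Fin.ext (Nat.mod_eq_of_lt hv)))

theorem fiber_subset_or_exists_embedding (A : C) :
    (Sigma.fst ⁻¹' {A} : Set GC.MicroV) ⊆ {v | (v.2 : ℕ) < 4} ∨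
      ∃ rep : Fin 4 ↪ GC.MicroV, ∀ i, (rep i).1 = A ∧ ((rep i).2 : ℕ) < 4 := by
  rcases lt_or_ge (GC.size A) 4 with hlt | hle
  · left
    rintro ⟨B, i⟩ rfl
    exact i.2.trans hlt
  · exact .inr ⟨(Fin.castLEEmb hle).trans (.sigmaMk (β := fun B => Fin (GC.size B)) A),
      fun i => ⟨rfl, i.2⟩⟩

end ClusterDAG

/-- (Infinity is at most four.) There is a compatible micro graph of
`G^C` with a `Z^m`-active path from `X^m` to `Y^m` iff there is one for the cluster-DAG
obtained by reducing every cluster of size greater than 4 to size 4. -/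
theorem infinity_leq_four {C : Type*} [Fintype C] (GC : ClusterDAG C)
    (hadm : GC.Admissible)
    (Xc Yc Zc : Set C) (hXY : Disjoint Xc Yc) (hXZ : Disjoint Xc Zc) (hYZ : Disjoint Yc Zc) :
    (∃ Gm : MixedGraph GC.MicroV, GC.Compatible Gm ∧
        Gm.DConnected (GC.microSet Xc) (GC.microSet Yc) (GC.microSet Zc)) ↔
    (∃ Gm4 : MixedGraph GC.truncate4.MicroV, GC.truncate4.Compatible Gm4 ∧
        Gm4.DConnected (GC.truncate4.microSet Xc) (GC.truncate4.microSet Yc)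
          (GC.truncate4.microSet Zc)) := by
  rw [ClusterDAG.exists_compatible_iff_exists_realizes hXZ hYZ,
    ClusterDAG.exists_compatible_iff_exists_realizes hXZ hYZ]
  constructor
  · rintro ⟨G, hG, hconn⟩
    obtain ⟨G', hG', hconn', hsupp⟩ :=
      hG.exists_support_subset GC.fiber_subset_or_exists_embedding hconn
    have hinv : Set.LeftInvOn GC.ofTruncate4 GC.toTruncate4 G'.support :=
      fun v hv => GC.ofTruncate4_toTruncate4 (hsupp hv)
    exact ⟨_, hG'.map hinv fun _ => rfl, .map (f := GC.toTruncate4) hconn' hinv.injOn⟩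
  · rintro ⟨G, hG, hconn⟩
    have hinv : Function.LeftInverse GC.toTruncate4 GC.ofTruncate4 := GC.toTruncate4_ofTruncate4
    exact ⟨_, hG.map (hinv.leftInvOn _) fun _ => rfl,
      .map (f := GC.ofTruncate4) hconn hinv.injective.injOn⟩
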